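/- P ∘ P = 0 as an operator K^{−q} → K^{−q−2}, for every 0 ≤ q ≤ n. -/

import Mathlib

/-!
Setting: `n ≥ 1`, `U ⊆ ℂⁿ` a nonempty convex open set.  Points of `U × U` are
written `p = (z, ζ)` with `z = p.1`, `ζ = p.2`.  For `0 ≤ q ≤ n`,
`K^{-q} = Λ^q(ℂⁿ) ⊗ O(U×U)` is encoded by the coefficients of its elements on
the basis `e^I`, where the strictly increasing multi-indices
`I = (i₁ < … < i_q)` are encoded as finsets `I ⊆ Fin n` of cardinality `q`.
-/

open scoped BigOperators

namespace TwistedKoszul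

variable (n : ℕ)

/-- Points of `ℂⁿ × ℂⁿ`. -/
abbrev Pt (n : ℕ) := (Fin n → ℂ) × (Fin n → ℂ)

/-- A family of coefficients, indexed by the basis vectors `e^I` of the
exterior algebra `Λ^•(ℂⁿ)` (strictly increasing multi-indices `I`, encoded as
finsets).  An element of `K^{-q}` is such a family supported on finsets of
cardinality `q`, with holomorphic coefficients (see `MemK`). -/
abbrev Coeff (n : ℕ) := Finset (Fin n) → Pt n → ℂ

/-- The sign `(-1)^{#{i ∈ I | i < j}}`, so that `e^j ∧ e^I = sgn j I • e^{I ∪ {j}}`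
for `j ∉ I`. -/
noncomputable def sgn (j : Fin n) (I : Finset (Fin n)) : ℂ :=
  (-1 : ℂ) ^ (I.filter (fun i => i < j)).card

/-- The holomorphic partial derivative `∂f/∂z^j` in the `j`-th coordinate of
the first factor. -/
noncomputable def pd (j : Fin n) (f : Pt n → ℂ) (p : Pt n) : ℂ :=
  fderiv ℂ f p (Pi.single j 1, 0)

/-- The Koszul differential `d_K : K^{-q} → K^{-q+1}`: contraction with
`Σ_i (z^i - ζ^i) ě^i`, i.e. `d_K(f e^I) = Σ_r (-1)^{r-1} (z^{i_r} - ζ^{i_r}) f e^{I_r}`. -/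
noncomputable def dK (ω : Coeff n) : Coeff n := fun J p =>
  ∑ j ∈ Jᶜ, sgn n j J * ((p.1 j - p.2 j) * ω (insert j J) p)

/-- The homotopy operator `P : K^{-q} → K^{-q-1}`:
`P(f e^I) = Σ_j (∫₀¹ t^{|I|} (∂f/∂z^j)(ζ + t(z - ζ), ζ) dt) e^j ∧ e^I`. -/
noncomputable def P (ω : Coeff n) : Coeff n := fun J p =>
  ∑ j ∈ J, sgn n j (J.erase j) *
    ∫ t in (0:ℝ)..1, (t : ℂ) ^ (J.card - 1) *
      pd n j (ω (J.erase j)) (p.2 + t • (p.1 - p.2), p.2)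

/-- The operator `res`: zero on `K^{-q}` for `q ≥ 1`, and
`res(f)(z, ζ) = f(ζ, ζ)` for `f ∈ K^0`. -/
noncomputable def res (ω : Coeff n) : Coeff n := fun J p =>
  if J = ∅ then ω ∅ (p.2, p.2) else 0

/-- The element of `K^0 = O(U×U)` determined by a single function. -/
noncomputable def ofFun (f : Pt n → ℂ) : Coeff n := fun J p => if J = ∅ then f p else 0

/-- `ω` is an element of `K^{-q}` over `U × U`: it is supported on
multi-indices of length `q` and its coefficients are holomorphic on `U × U`. -/
noncomputable def MemK (U : Set (Fin n → ℂ)) (q : ℕ) (ω : Coeff n) : Prop :=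
  (∀ I : Finset (Fin n), I.card ≠ q → ω I = 0) ∧
  ∀ I : Finset (Fin n), DifferentiableOn ℂ (ω I) (U ×ˢ U)

end TwistedKoszul

namespace TwistedKoszul

/-!
Write `T_m g (z, ζ) = ∫₀¹ tᵐ g(ζ + t(z - ζ), ζ) dt`, so that on degree `q` the operator `P` is
`Σ_j e^j ∧ T_q ∂_j`. The chain rule gives `∂_j T_q = T_{q+1} ∂_j`, whence `P ∘ P` is
`Σ_{j,k} e^j ∧ e^k ∧ T_{q+1} T_{q+1} ∂_j ∂_k`, which vanishes because `∂_j ∂_k` is symmetric and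
`e^j ∧ e^k` is antisymmetric in `j, k`.

The analytic input is that a holomorphic function of several variables is smooth. The Schwarz
lemma, applied to `f` and to its differences `f(· + h) - f`, shows that the derivative is locally
Lipschitz; this permits differentiating Cauchy's formula for a directional derivative under the
integral sign, so the directional derivatives are again holomorphic.
-/

open Metric Set MeasureTheory Filter Topology Function
open scoped NNReal

section ParametricIntegral

variable {𝕜 : Type*} [RCLike 𝕜]
  {E : Type*} [NormedAddCommGroup E] [NormedSpace 𝕜 E]
  {F : Type*} [NormedAddCommGroup F] [NormedSpace ℝ F] [NormedSpace 𝕜 F]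

theorem hasFDerivAt_intervalIntegral_of_continuousOn_fderiv {a b : ℝ} {s : Set E} {x₀ : E}
    {f : E → ℝ → F} {f' : E → ℝ → E →L[𝕜] F} (hs : s ∈ 𝓝 x₀)
    (hf : ∀ x ∈ s, ContinuousOn (f x) (uIcc a b))
    (hf' : ContinuousOn (uncurry f') (s ×ˢ uIcc a b))
    (hderiv : ∀ x ∈ s, ∀ t ∈ uIcc a b, HasFDerivAt (f · t) (f' x t) x) :
    HasFDerivAt (fun x ↦ ∫ t in a..b, f x t) (∫ t in a..b, f' x₀ t) x₀ := by
  have hx₀ : x₀ ∈ s := mem_of_mem_nhds hs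
  have hf'₀ : ContinuousOn (f' x₀) (uIcc a b) :=
    hf'.comp (f := fun t ↦ (x₀, t)) (by fun_prop) fun t ht ↦ ⟨hx₀, ht⟩
  obtain ⟨C, hC⟩ := isCompact_uIcc.exists_bound_of_continuousOn hf'₀
  obtain ⟨v, hv, hclose⟩ :=
    isCompact_uIcc.mem_uniformity_of_prod hf' hx₀ (dist_mem_uniformity one_pos)
  rw [nhdsWithin_eq_nhds.2 hs] at hv
  have hbound : ∀ t ∈ uIcc a b, ∀ x ∈ v, ‖f' x t‖ ≤ C + 1 := fun t ht x hx ↦ by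
    have hdist : ‖f' x t - f' x₀ t‖ < 1 := by simpa [dist_eq_norm] using hclose x hx t ht
    linarith [hC t ht, norm_le_norm_add_norm_sub' (f' x t) (f' x₀ t)]
  refine intervalIntegral.hasFDerivAt_integral_of_dominated_of_fderiv_le
    (F' := f') (bound := fun _ ↦ C + 1) (inter_mem hs hv) ?_ (hf x₀ hx₀).intervalIntegrable
    ((hf'₀.mono uIoc_subset_uIcc).aestronglyMeasurable measurableSet_uIoc)
    (.of_forall fun t ht x hx ↦ hbound t (uIoc_subset_uIcc ht) x hx.2)
    intervalIntegrable_const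
    (.of_forall fun t ht x hx ↦ hderiv x hx.1 t (uIoc_subset_uIcc ht))
  filter_upwards [hs] with x hx
  exact ((hf x hx).mono uIoc_subset_uIcc).aestronglyMeasurable measurableSet_uIoc

end ParametricIntegral

theorem fderiv_fderiv_apply_comm {𝕜 : Type*} [RCLike 𝕜]
    {E : Type*} [NormedAddCommGroup E] [NormedSpace 𝕜 E]
    {F : Type*} [NormedAddCommGroup F] [NormedSpace 𝕜 F] {f : E → F} {x : E}
    (hf : ContDiffAt 𝕜 2 f x) (v w : E) :
    fderiv 𝕜 (fun y ↦ fderiv 𝕜 f y v) x w = fderiv 𝕜 (fun y ↦ fderiv 𝕜 f y w) x v := by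
  have hdiff : DifferentiableAt 𝕜 (fderiv 𝕜 f) x :=
    (hf.fderiv_right (m := 1) le_rfl).differentiableAt one_ne_zero
  have hsymm : IsSymmSndFDerivAt 𝕜 f x := hf.isSymmSndFDerivAt (by simp)
  rw [fderiv_clm_apply hdiff (by fun_prop), fderiv_clm_apply hdiff (by fun_prop)]
  simpa using hsymm.eq w v

section Holomorphic

variable {E : Type*} [NormedAddCommGroup E] [NormedSpace ℂ E]
  {F : Type*} [NormedAddCommGroup F] [NormedSpace ℂ F] {f : E → F} {W : Set E}

theorem exists_lipschitzOnWith_ball_of_differentiableOn (hW : IsOpen W)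
    (hf : DifferentiableOn ℂ f W) {p : E} (hp : p ∈ W) :
    ∃ r > 0, ∃ C : ℝ≥0, ball p r ⊆ W ∧ LipschitzOnWith C f (ball p r) := by
  have hcont : ContinuousAt f p := hf.continuousOn.continuousAt (hW.mem_nhds hp)
  obtain ⟨r, hr, hball⟩ := Metric.mem_nhds_iff.1
    (inter_mem (hW.mem_nhds hp) (hcont.preimage_mem_nhds (ball_mem_nhds (f p) one_pos)))
  refine ⟨r / 3, by positivity, ⟨2 / (2 * r / 3), by positivity⟩,
    fun x hx ↦ (hball (ball_subset_ball (by linarith) hx)).1,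
    .of_dist_le_mul fun x hx y hy ↦ ?_⟩
  have hsub : ball y (2 * r / 3) ⊆ ball p r :=
    ball_subset_ball' (by linarith [mem_ball.1 hy])
  refine Complex.dist_le_div_mul_dist_of_mapsTo_ball (hf.mono fun z hz ↦ (hball (hsub hz)).1)
    (fun z hz ↦ ?_) ?_
  · have hz' := mem_ball.1 (hball (hsub hz)).2
    have hy' := mem_ball.1 (hball (hsub (mem_ball_self (by positivity)))).2
    exact mem_closedBall.2 (by linarith [dist_triangle_right (f z) (f y) (f p)])
  · exact mem_ball.2 (by linarith [dist_triangle_right x y p, mem_ball.1 hx, mem_ball.1 hy])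

theorem norm_fderiv_sub_le_of_lipschitzOnWith_ball {p x y : E} {r : ℝ} {C : ℝ≥0}
    (hf : DifferentiableOn ℂ f (ball p (2 * r))) (hlip : LipschitzOnWith C f (ball p (2 * r)))
    (hx : x ∈ ball p r) (hy : y ∈ ball p r) :
    ‖fderiv ℂ f y - fderiv ℂ f x‖ ≤ 2 * C * ‖y - x‖ / r := by
  have hr : 0 < r := pos_of_mem_ball hx
  have hmem : ∀ z ∈ ball x r, z ∈ ball p (2 * r) ∧ z + (y - x) ∈ ball p (2 * r) := fun z hz ↦ by
    simp only [mem_ball, dist_eq_norm] at hx hy hz ⊢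
    constructor
    · linarith [norm_sub_le_norm_sub_add_norm_sub z x p]
    · rw [show z + (y - x) - p = (z - x) + (y - p) by abel]
      linarith [norm_add_le (z - x) (y - p)]
  have hdiff : ∀ z ∈ ball p (2 * r), DifferentiableAt ℂ f z := fun z hz ↦
    hf.differentiableAt (isOpen_ball.mem_nhds hz)
  set g : E → F := fun z ↦ f (z + (y - x)) - f z
  have hgd : ∀ z ∈ ball x r,
      HasFDerivAt g (fderiv ℂ f (z + (y - x)) - fderiv ℂ f z) z := fun z hz ↦
    ((hasFDerivAt_comp_add_right _).2 (hdiff _ (hmem z hz).2).hasFDerivAt).sub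
      (hdiff _ (hmem z hz).1).hasFDerivAt
  have hgle : ∀ z ∈ ball x r, ‖g z‖ ≤ C * ‖y - x‖ := fun z hz ↦ by
    simpa using hlip.norm_sub_le (hmem z hz).2 (hmem z hz).1
  have hxx : x ∈ ball x r := mem_ball_self hr
  have hfderiv : fderiv ℂ g x = fderiv ℂ f y - fderiv ℂ f x := by
    simpa using (hgd x hxx).fderiv
  rw [← hfderiv]
  refine Complex.norm_fderiv_le_div_of_mapsTo_ball
    (fun z hz ↦ (hgd z hz).differentiableAt.differentiableWithinAt) (fun z hz ↦ ?_) hr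
  rw [mem_closedBall, dist_eq_norm]
  linarith [norm_sub_le (g z) (g x), hgle z hz, hgle x hxx]

theorem continuousOn_fderiv_of_differentiableOn (hW : IsOpen W) (hf : DifferentiableOn ℂ f W) :
    ContinuousOn (fderiv ℂ f) W := by
  intro p hp
  obtain ⟨r, hr, C, hball, hlip⟩ := exists_lipschitzOnWith_ball_of_differentiableOn hW hf hp
  obtain ⟨r, rfl⟩ : ∃ ρ, r = 2 * ρ := ⟨r / 2, by ring⟩
  have hr' : 0 < r := by linarith
  refine (continuousAt_of_locally_lipschitz hr' (2 * C / r) fun y hy ↦ ?_).continuousWithinAt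
  rw [dist_eq_norm, dist_eq_norm]
  exact (norm_fderiv_sub_le_of_lipschitzOnWith_ball (hf.mono hball) hlip (mem_ball_self hr')
    hy).trans_eq (by ring)

theorem fderiv_apply_eq_circleIntegral [CompleteSpace F] {x v : E} {R : ℝ} (hR : 0 < R)
    (hf : ∀ w ∈ closedBall (0 : ℂ) R, DifferentiableAt ℂ f (x + w • v)) :
    fderiv ℂ f x v =
      (2 * Real.pi * Complex.I : ℂ)⁻¹ • ∮ w in C(0, R), (1 / w ^ 2) • f (x + w • v) := by
  have hline : ∀ w ∈ closedBall (0 : ℂ) R,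
      HasDerivAt (fun w : ℂ ↦ f (x + w • v)) (fderiv ℂ f (x + w • v) v) w := fun w hw ↦
    (hf w hw).hasFDerivAt.comp_hasDerivAt w
      (by simpa using ((hasDerivAt_id w).smul_const v).const_add x)
  have hcauchy := DifferentiableOn.deriv_eq_smul_circleIntegral hR
    fun w hw ↦ (hline w hw).differentiableAt.differentiableWithinAt
  rw [(hline 0 (mem_closedBall_self hR.le)).deriv] at hcauchy
  simp only [zero_smul, add_zero, sub_zero] at hcauchy
  rw [hcauchy, inv_smul_smul₀ Complex.two_pi_I_ne_zero]

theorem exists_mem_nhds_add_smul_mem {p : E} (hW : W ∈ 𝓝 p) (v : E) :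
    ∃ s ∈ 𝓝 p, ∃ R > 0, ∀ x ∈ s, ∀ w ∈ closedBall (0 : ℂ) R, x + w • v ∈ W := by
  have hcont : ContinuousAt (fun y : E × ℂ ↦ y.1 + y.2 • v) (p, 0) := by fun_prop
  obtain ⟨s, hs, u, hu, hsu⟩ :=
    mem_nhds_prod_iff.1 (hcont.preimage_mem_nhds (by simpa using hW))
  obtain ⟨R, hR, hRu⟩ := nhds_basis_closedBall.mem_iff.1 hu
  exact ⟨s, hs, R, hR, fun x hx w hw ↦ hsu (mk_mem_prod hx (hRu hw))⟩

theorem differentiableOn_fderiv_apply [CompleteSpace F] (hW : IsOpen W)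
    (hf : DifferentiableOn ℂ f W) (v : E) :
    DifferentiableOn ℂ (fun x ↦ fderiv ℂ f x v) W := by
  intro p hp
  obtain ⟨s, hs, R, hR, hmem⟩ := exists_mem_nhds_add_smul_mem (hW.mem_nhds hp) v
  have hdiff : ∀ y ∈ W, DifferentiableAt ℂ f y := fun y hy ↦
    hf.differentiableAt (hW.mem_nhds hy)
  have hcircle : ∀ θ, circleMap 0 R θ ∈ closedBall (0 : ℂ) R :=
    circleMap_mem_closedBall 0 hR.le
  let kernel : ℝ → ℂ := fun θ ↦ deriv (circleMap 0 R) θ * (1 / circleMap 0 R θ ^ 2)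
  have hkernel : Continuous kernel := by
    simp only [kernel, deriv_circleMap]
    fun_prop (disch := simp [hR.ne'])
  have hparam := hasFDerivAt_intervalIntegral_of_continuousOn_fderiv (a := 0)
    (b := 2 * Real.pi) (f := fun x θ ↦ kernel θ • f (x + circleMap 0 R θ • v))
    (f' := fun x θ ↦ kernel θ • fderiv ℂ f (x + circleMap 0 R θ • v)) hs
    (fun x hx ↦ hkernel.continuousOn.smul <|
      hf.continuousOn.comp (by fun_prop) fun θ _ ↦ hmem x hx _ (hcircle θ))
    ((by fun_prop : Continuous fun y : E × ℝ ↦ kernel y.2).continuousOn.smul <|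
      (continuousOn_fderiv_of_differentiableOn hW hf).comp (by fun_prop)
        fun y hy ↦ hmem y.1 hy.1 _ (hcircle y.2))
    fun x hx θ _ ↦ ((hasFDerivAt_comp_add_right _).2
      (hdiff _ (hmem x hx _ (hcircle θ))).hasFDerivAt).const_smul (kernel θ)
  refine ((hparam.differentiableAt.const_smul (2 * Real.pi * Complex.I : ℂ)⁻¹)
    |>.congr_of_eventuallyEq ?_).differentiableWithinAt
  filter_upwards [hs] with x hx
  rw [fderiv_apply_eq_circleIntegral hR fun w hw ↦ hdiff _ (hmem x hx w hw)]
  simp only [circleIntegral, kernel, mul_smul, Pi.smul_apply]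

theorem contDiffOn_of_differentiableOn_complex [FiniteDimensional ℂ E] [CompleteSpace F]
    (hW : IsOpen W) (hf : DifferentiableOn ℂ f W) (n : ℕ) : ContDiffOn ℂ n f W := by
  induction n generalizing f with
  | zero => exact contDiffOn_zero.2 hf.continuousOn
  | succ n ih =>
    exact (contDiffOn_succ_iff_fderiv_of_isOpen hW).2 ⟨hf, by simp,
      contDiffOn_clm_apply.2 fun v ↦ ih (differentiableOn_fderiv_apply hW hf v)⟩

end Holomorphic

section Signs

variable {n : ℕ} {J : Finset (Fin n)} {j k : Fin n}

theorem sgn_erase_of_le (h : k ≤ j) : sgn n k (J.erase j) = sgn n k J := by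
  rw [sgn, sgn, Finset.filter_erase, Finset.erase_eq_of_notMem (by simp [h])]

theorem sgn_erase_of_lt (hj : j ∈ J) (h : j < k) : sgn n k (J.erase j) = -sgn n k J := by
  have hj' : j ∈ J.filter (· < k) := Finset.mem_filter.2 ⟨hj, h⟩
  rw [sgn, sgn, Finset.filter_erase, ← Finset.card_erase_add_one hj', pow_succ]
  ring

theorem sgn_mul_sgn_erase_of_lt (hj : j ∈ J) (h : j < k) :
    sgn n j (J.erase j) * sgn n k ((J.erase j).erase k) =
      -(sgn n k (J.erase k) * sgn n j ((J.erase k).erase j)) := by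
  rw [sgn_erase_of_le le_rfl, sgn_erase_of_le le_rfl, sgn_erase_of_le le_rfl,
    sgn_erase_of_le le_rfl, sgn_erase_of_lt hj h, sgn_erase_of_le h.le]
  ring

theorem sgn_mul_sgn_erase_antisymm (hj : j ∈ J) (hk : k ∈ J) (h : j ≠ k) :
    sgn n j (J.erase j) * sgn n k ((J.erase j).erase k) =
      -(sgn n k (J.erase k) * sgn n j ((J.erase k).erase j)) := by
  rcases h.lt_or_gt with h | h
  · exact sgn_mul_sgn_erase_of_lt hj h
  · rw [sgn_mul_sgn_erase_of_lt hk h, neg_neg]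

theorem sum_sum_erase_eq_zero_of_antisymm {ι M : Type*} [DecidableEq ι] [AddCommGroup M]
    [IsAddTorsionFree M] (s : Finset ι) (g : ι → ι → M)
    (hg : ∀ j ∈ s, ∀ k ∈ s, j ≠ k → g j k = -g k j) :
    ∑ j ∈ s, ∑ k ∈ s.erase j, g j k = 0 := by
  refine self_eq_neg.1 ?_
  calc ∑ j ∈ s, ∑ k ∈ s.erase j, g j k
      = ∑ k ∈ s, ∑ j ∈ s.erase k, g j k :=
        Finset.sum_comm' fun j k ↦ by simp only [Finset.mem_erase]; tauto
    _ = ∑ k ∈ s, ∑ j ∈ s.erase k, -g k j :=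
        Finset.sum_congr rfl fun k hk ↦ Finset.sum_congr rfl fun j hj ↦
          hg j (Finset.mem_of_mem_erase hj) k hk (Finset.ne_of_mem_erase hj)
    _ = -∑ j ∈ s, ∑ k ∈ s.erase j, g j k := by simp only [Finset.sum_neg_distrib]

end Signs

section PartialDerivative

variable {n : ℕ} {W : Set (Pt n)} {f : Pt n → ℂ}

theorem differentiableOn_pd (hW : IsOpen W) (hf : DifferentiableOn ℂ f W) (j : Fin n) :
    DifferentiableOn ℂ (pd n j f) W :=
  differentiableOn_fderiv_apply hW hf _

theorem pd_comm (hW : IsOpen W) (hf : DifferentiableOn ℂ f W) (j k : Fin n) {x : Pt n}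
    (hx : x ∈ W) : pd n j (pd n k f) x = pd n k (pd n j f) x :=
  fderiv_fderiv_apply_comm
    ((contDiffOn_of_differentiableOn_complex hW hf 2).contDiffAt (hW.mem_nhds hx)) _ _

theorem pd_sum_const_mul {ι : Type*} (s : Finset ι) (c : ι → ℂ) {g : ι → Pt n → ℂ} (j : Fin n)
    {x : Pt n} (hg : ∀ i ∈ s, DifferentiableAt ℂ (g i) x) :
    pd n j (fun y ↦ ∑ i ∈ s, c i * g i y) x = ∑ i ∈ s, c i * pd n j (g i) x := by
  have hsum := HasFDerivAt.fun_sum fun i hi ↦ (hg i hi).hasFDerivAt.const_mul (c i)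
  simp [pd, hsum.fderiv]

end PartialDerivative

section RadialIntegral

variable {n : ℕ}

/-- The contraction `(z, ζ) ↦ (ζ + t(z - ζ), ζ)` of `ℂⁿ × ℂⁿ` towards the diagonal. -/
noncomputable def towardDiagonal (t : ℝ) : Pt n →L[ℂ] Pt n :=
  let fst := ContinuousLinearMap.fst ℂ (Fin n → ℂ) (Fin n → ℂ)
  let snd := ContinuousLinearMap.snd ℂ (Fin n → ℂ) (Fin n → ℂ)
  (snd + (t : ℂ) • (fst - snd)).prod snd

theorem towardDiagonal_apply (t : ℝ) (x : Pt n) :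
    towardDiagonal t x = (x.2 + t • (x.1 - x.2), x.2) := by
  simp [towardDiagonal]

theorem towardDiagonal_apply_mk_zero (t : ℝ) (v : Fin n → ℂ) :
    towardDiagonal t ((v, 0) : Pt n) = (t : ℂ) • (v, 0) := by
  simp [towardDiagonal]

theorem continuous_towardDiagonal : Continuous (towardDiagonal (n := n)) :=
  continuous_clm_apply.2 fun x ↦ by
    simp only [towardDiagonal_apply]
    fun_prop

/-- `W` is star-shaped about the diagonal: it contains, with each point `(z, ζ)`, the segment
joining it to `(ζ, ζ)` in the first factor. These are the domains on which the integrals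
defining `P` make sense. -/
def StarAboutDiagonal (W : Set (Pt n)) : Prop :=
  ∀ x ∈ W, ∀ t ∈ Icc (0 : ℝ) 1, (x.2 + t • (x.1 - x.2), x.2) ∈ W

theorem starAboutDiagonal_prod_self {U : Set (Fin n → ℂ)} (hU : Convex ℝ U) :
    StarAboutDiagonal (U ×ˢ U) :=
  fun _ hx _ ht ↦ ⟨hU.add_smul_sub_mem hx.2 hx.1 ht, hx.2⟩

/-- The operator `g ↦ ∫₀¹ tᵐ g(ζ + t(z - ζ), ζ) dt`, through which `P` is built. -/
noncomputable def radialIntegral (m : ℕ) (g : Pt n → ℂ) (x : Pt n) : ℂ :=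
  ∫ t in (0 : ℝ)..1, (t : ℂ) ^ m * g (towardDiagonal t x)

variable {W : Set (Pt n)} {g : Pt n → ℂ} {x : Pt n} {t : ℝ}

theorem StarAboutDiagonal.towardDiagonal_mem (hstar : StarAboutDiagonal W) (hx : x ∈ W)
    (ht : t ∈ uIcc (0 : ℝ) 1) : towardDiagonal t x ∈ W := by
  rw [towardDiagonal_apply]
  exact hstar x hx t (uIcc_of_le (zero_le_one' ℝ) ▸ ht)

theorem radialIntegral_congr (hstar : StarAboutDiagonal W) {h : Pt n → ℂ} (hgh : EqOn g h W)
    (m : ℕ) (hx : x ∈ W) : radialIntegral m g x = radialIntegral m h x :=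
  intervalIntegral.integral_congr fun t ht ↦ by
    simp only [hgh (hstar.towardDiagonal_mem hx ht)]

theorem continuousOn_pow_mul_comp_towardDiagonal (hstar : StarAboutDiagonal W)
    (hg : ContinuousOn g W) (m : ℕ) (hx : x ∈ W) :
    ContinuousOn (fun t : ℝ ↦ (t : ℂ) ^ m * g (towardDiagonal t x)) (uIcc 0 1) := by
  have hcurve : Continuous fun t ↦ towardDiagonal t x :=
    continuous_towardDiagonal.clm_apply continuous_const
  exact ContinuousOn.mul (by fun_prop)
    (hg.comp hcurve.continuousOn fun t ht ↦ hstar.towardDiagonal_mem hx ht)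

theorem radialIntegral_sum_const_mul (hstar : StarAboutDiagonal W) {ι : Type*} (s : Finset ι)
    (c : ι → ℂ) {g : ι → Pt n → ℂ} (hg : ∀ i ∈ s, ContinuousOn (g i) W) (m : ℕ) (hx : x ∈ W) :
    radialIntegral m (fun y ↦ ∑ i ∈ s, c i * g i y) x =
      ∑ i ∈ s, c i * radialIntegral m (g i) x := by
  simp only [radialIntegral, ← intervalIntegral.integral_const_mul]
  rw [← intervalIntegral.integral_finsetSum]
  · simp only [Finset.mul_sum, mul_left_comm]
  · exact fun i hi ↦ (continuousOn_const.mul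
      (continuousOn_pow_mul_comp_towardDiagonal hstar (hg i hi) m hx)).intervalIntegrable

theorem continuousOn_fderiv_comp_towardDiagonal (hW : IsOpen W) (hstar : StarAboutDiagonal W)
    (hg : DifferentiableOn ℂ g W) (m : ℕ) :
    ContinuousOn (uncurry fun (x : Pt n) (t : ℝ) ↦
      (t : ℂ) ^ m • (fderiv ℂ g (towardDiagonal t x)).comp (towardDiagonal t))
      (W ×ˢ uIcc 0 1) := by
  have htoward : Continuous fun y : Pt n × ℝ ↦ towardDiagonal (n := n) y.2 :=
    continuous_towardDiagonal.comp continuous_snd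
  have hfderiv : ContinuousOn (fun y : Pt n × ℝ ↦ fderiv ℂ g (towardDiagonal y.2 y.1))
      (W ×ˢ uIcc 0 1) :=
    (continuousOn_fderiv_of_differentiableOn hW hg).comp
      (htoward.clm_apply continuous_fst).continuousOn
      fun y hy ↦ hstar.towardDiagonal_mem hy.1 hy.2
  have hpow : Continuous fun y : Pt n × ℝ ↦ (y.2 : ℂ) ^ m := by fun_prop
  exact hpow.continuousOn.smul (hfderiv.clm_comp htoward.continuousOn)

theorem hasFDerivAt_radialIntegral (hW : IsOpen W) (hstar : StarAboutDiagonal W)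
    (hg : DifferentiableOn ℂ g W) (m : ℕ) (hx : x ∈ W) :
    HasFDerivAt (radialIntegral m g)
      (∫ t in (0 : ℝ)..1,
        (t : ℂ) ^ m • (fderiv ℂ g (towardDiagonal t x)).comp (towardDiagonal t)) x :=
  hasFDerivAt_intervalIntegral_of_continuousOn_fderiv (hW.mem_nhds hx)
    (fun _ hy ↦ continuousOn_pow_mul_comp_towardDiagonal hstar hg.continuousOn m hy)
    (continuousOn_fderiv_comp_towardDiagonal hW hstar hg m)
    fun _ hy t ht ↦ ((hg.differentiableAt (hW.mem_nhds
      (hstar.towardDiagonal_mem hy ht))).hasFDerivAt.comp _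
        (towardDiagonal t).hasFDerivAt).const_mul _

theorem pd_radialIntegral (hW : IsOpen W) (hstar : StarAboutDiagonal W)
    (hg : DifferentiableOn ℂ g W) (m : ℕ) (j : Fin n) (hx : x ∈ W) :
    pd n j (radialIntegral m g) x = radialIntegral (m + 1) (pd n j g) x := by
  have hint : IntervalIntegrable (fun t : ℝ ↦
      (t : ℂ) ^ m • (fderiv ℂ g (towardDiagonal t x)).comp (towardDiagonal t)) volume 0 1 :=
    ((continuousOn_fderiv_comp_towardDiagonal hW hstar hg m).comp
      (f := fun t ↦ (x, t)) (by fun_prop) fun t ht ↦ ⟨hx, ht⟩).intervalIntegrable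
  rw [pd, (hasFDerivAt_radialIntegral hW hstar hg m hx).fderiv,
    ContinuousLinearMap.intervalIntegral_apply hint]
  refine intervalIntegral.integral_congr fun t _ ↦ ?_
  rw [smul_apply, ContinuousLinearMap.comp_apply, towardDiagonal_apply_mk_zero, map_smul,
    smul_smul, ← pow_succ, smul_eq_mul, pd]

end RadialIntegral

section HomotopyOperator

variable {n : ℕ} {W : Set (Pt n)} {ω : Coeff n} {p : Pt n}

theorem P_apply (ω : Coeff n) (J : Finset (Fin n)) (p : Pt n) :
    P n ω J p = ∑ j ∈ J, sgn n j (J.erase j) *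
      radialIntegral (J.card - 1) (pd n j (ω (J.erase j))) p := by
  simp only [P, radialIntegral, towardDiagonal_apply]

theorem pd_P (hW : IsOpen W) (hstar : StarAboutDiagonal W)
    (hω : ∀ I, DifferentiableOn ℂ (ω I) W) (I : Finset (Fin n)) (j : Fin n) (hp : p ∈ W) :
    pd n j (P n ω I) p = ∑ k ∈ I, sgn n k (I.erase k) *
      radialIntegral I.card (pd n j (pd n k (ω (I.erase k)))) p := by
  have hpd (k : Fin n) : DifferentiableOn ℂ (pd n k (ω (I.erase k))) W :=
    differentiableOn_pd hW (hω _) k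
  rw [funext (P_apply ω I), pd_sum_const_mul _ _ _ fun k _ ↦
    (hasFDerivAt_radialIntegral hW hstar (hpd k) _ hp).differentiableAt]
  refine Finset.sum_congr rfl fun k hk ↦ ?_
  rw [pd_radialIntegral hW hstar (hpd k) _ j hp,
    Nat.sub_add_cancel (Finset.card_pos.2 ⟨k, hk⟩)]

theorem P_P_apply (hW : IsOpen W) (hstar : StarAboutDiagonal W)
    (hω : ∀ I, DifferentiableOn ℂ (ω I) W) (J : Finset (Fin n)) (hp : p ∈ W) :
    P n (P n ω) J p = ∑ j ∈ J, ∑ k ∈ J.erase j,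
      sgn n j (J.erase j) * sgn n k ((J.erase j).erase k) *
        radialIntegral (J.card - 1) (radialIntegral (J.card - 1)
          (pd n j (pd n k (ω ((J.erase j).erase k))))) p := by
  rw [P_apply]
  refine Finset.sum_congr rfl fun j hj ↦ ?_
  rw [radialIntegral_congr hstar (fun x hx ↦ pd_P hW hstar hω (J.erase j) j hx) _ hp,
    radialIntegral_sum_const_mul hstar _ _ (fun k _ x hx ↦ ?_) _ hp, Finset.mul_sum,
    Finset.card_erase_of_mem hj]
  · simp only [mul_assoc]
  · exact (hasFDerivAt_radialIntegral hW hstar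
      (differentiableOn_pd hW (differentiableOn_pd hW (hω _) k) j) _
      hx).continuousAt.continuousWithinAt

theorem statement1_general (hW : IsOpen W) (hstar : StarAboutDiagonal W)
    (hω : ∀ I, DifferentiableOn ℂ (ω I) W) (J : Finset (Fin n)) (hp : p ∈ W) :
    P n (P n ω) J p = 0 := by
  rw [P_P_apply hW hstar hω J hp]
  refine sum_sum_erase_eq_zero_of_antisymm J _ fun j hj k hk hjk ↦ ?_
  have hcomm : EqOn (pd n j (pd n k (ω ((J.erase j).erase k))))
      (pd n k (pd n j (ω ((J.erase k).erase j)))) W := fun x hx ↦ by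
    rw [Finset.erase_right_comm, pd_comm hW (hω _) j k hx]
  rw [sgn_mul_sgn_erase_antisymm hj hk hjk, radialIntegral_congr hstar
    (fun x hx ↦ radialIntegral_congr hstar hcomm _ hx) _ hp, neg_mul]

end HomotopyOperator

/-- `P ∘ P = 0` as an operator `K^{-q} → K^{-q-2}`,
for every `0 ≤ q ≤ n`. -/
theorem statement1 (n : ℕ) (hn : 1 ≤ n)
    (U : Set (Fin n → ℂ)) (hUopen : IsOpen U) (hUconv : Convex ℝ U)
    (hUne : U.Nonempty)
    (q : ℕ) (hq : q ≤ n) (ω : Coeff n) (hω : MemK n U q ω) :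
    ∀ J : Finset (Fin n), ∀ p ∈ U ×ˢ U, P n (P n ω) J p = 0 := by
  exact fun J _ hp ↦
    statement1_general (hUopen.prod hUopen) (starAboutDiagonal_prod_self hUconv) hω.2 J hp

end TwistedKoszul
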